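/- Let p > 3 be a prime. Then ∑_{k=1}^{(p-1)/2} H_k/k ≡ 2·q_p(2)^2 - 2p·q_p(2)^3 + (7/6)·p·B_{p-3} modulo p^2 (as rational numbers). -/

import Mathlib

/-- Two rationals `a` and `b` are congruent modulo `p^r`:
the `p`-adic valuation of `a - b` is at least `r`, i.e. `a - b = c * p^r`
with the denominator of `c` not divisible by `p`. -/
def ratCongr (p r : ℕ) (a b : ℚ) : Prop :=
  ∃ c : ℚ, a - b = c * (p : ℚ) ^ r ∧ ¬ (p ∣ c.den)

/-- The Fermat quotient `q_p(2) = (2^(p-1) - 1)/p` (an integer for odd primes),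
viewed as a rational number. -/
def fermatQ (p : ℕ) : ℚ := ((2 : ℚ) ^ (p - 1) - 1) / p

/-!
Symmetrizing the double sum `∑_{j ≤ k ≤ n} 1 / (j * k)` gives
`∑_{k ≤ n} H_k / k = (H_n ^ 2 + H_n^{(2)}) / 2`, so it suffices to know `H_n` and `H_n^{(2)}` modulo
`p ^ 2` for `n = (p - 1) / 2`.

The numbers `1, …, p - 1` fall into the pairs `{k, p - k}` as well as into the pairs
`{2 * k, p - 2 * k}`, where `1 ≤ k ≤ n`. Since `(p - x) ^ m ≡ x ^ m - p * m * x ^ (m - 1)` modulo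
`p ^ 2` for even `m`, the two pairings express the full power sum of exponent `m` through the half
power sums of exponents `m` and `m - 1` in two ways. For `m = -2`, equating them gives
`H_n^{(2)} ≡ -(7 / 6) * p * H_n^{(3)}`. For `m = p - 3`, where the full power sum is
`p * B_{p-3}` modulo `p ^ 2`, they determine `H_n^{(3)} ≡ -2 * B_{p-3}` modulo `p`.

Applied to `(p - 1)!`, the same pairings yield
`2 ^ (p - 1) * ∏ (1 - p / (2 * k)) = ∏ (1 - p / k)`; expanding both products modulo `p ^ 3` gives a
quadratic congruence for `H_n`, whose solution is `H_n ≡ -2 * q + p * q ^ 2` modulo `p ^ 2` with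
`q = q_p(2)`.
-/

open Finset

section Pairing

variable {M : Type*} [CommMonoid M]

@[to_additive sum_Icc_two_mul_eq_sum_add_reflect]
lemma prod_Icc_two_mul_eq_prod_mul_reflect (f : ℕ → M) (n : ℕ) :
    ∏ j ∈ Icc 1 (2 * n), f j = ∏ k ∈ Icc 1 n, f k * f (2 * n + 1 - k) := by
  have hupper : ∏ k ∈ Icc 1 n, f (2 * n + 1 - k) = ∏ j ∈ Ioc n (2 * n), f j :=
    prod_nbij' (2 * n + 1 - ·) (2 * n + 1 - ·) (by grind) (by grind) (by grind) (by grind)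
      (by grind)
  have hconsec := prod_Ioc_consecutive f n.zero_le (Nat.le_mul_of_pos_left n two_pos)
  rw [prod_mul_distrib, hupper]
  simpa only [← Icc_add_one_left_eq_Ioc 0, zero_add] using hconsec.symm

@[to_additive sum_Icc_two_mul_eq_sum_even_add_odd]
lemma prod_Icc_two_mul_eq_prod_even_mul_odd (f : ℕ → M) (n : ℕ) :
    ∏ j ∈ Icc 1 (2 * n), f j = ∏ k ∈ Icc 1 n, f (2 * k) * f (2 * k - 1) := by
  induction n with
  | zero => simp
  | succ n ih =>
    rw [mul_add_one, prod_Icc_succ_top (by lia), prod_Icc_succ_top (by lia), ih,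
      prod_Icc_succ_top (by lia), mul_assoc, mul_comm (f _)]
    rfl

@[to_additive sum_Icc_two_mul_eq_sum_even_add_reflect]
lemma prod_Icc_two_mul_eq_prod_even_mul_reflect (f : ℕ → M) (n : ℕ) :
    ∏ j ∈ Icc 1 (2 * n), f j = ∏ k ∈ Icc 1 n, f (2 * k) * f (2 * n + 1 - 2 * k) := by
  have hodd : ∏ k ∈ Icc 1 n, f (2 * n + 1 - 2 * k) = ∏ k ∈ Icc 1 n, f (2 * k - 1) :=
    prod_nbij' (n + 1 - ·) (n + 1 - ·) (by grind) (by grind) (by grind) (by grind) (by grind)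
  rw [prod_Icc_two_mul_eq_prod_even_mul_odd, prod_mul_distrib, prod_mul_distrib, hodd]

end Pairing

section Factorial

variable {K : Type*} [Field K] [CharZero K]

lemma natCast_mul_natCast_sub {N k : ℕ} (hk : k ≠ 0) (hkN : k ≤ N) :
    (k : K) * (N - k : ℕ) = -(k : K) ^ 2 * (1 - N * (k : K)⁻¹) := by
  have hk0 : (k : K) ≠ 0 := Nat.cast_ne_zero.2 hk
  rw [Nat.cast_sub hkN]
  field_simp
  ring

lemma two_pow_mul_prod_one_sub (n : ℕ) :
    (2 : K) ^ (2 * n) * ∏ k ∈ Icc 1 n, (1 - (2 * n + 1 : ℕ) * ((2 * k : ℕ) : K)⁻¹) =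
      ∏ k ∈ Icc 1 n, (1 - (2 * n + 1 : ℕ) * (k : K)⁻¹) := by
  have hne : ∏ k ∈ Icc 1 n, -(k : K) ^ 2 ≠ 0 := prod_ne_zero_iff.2 fun k hk =>
    neg_ne_zero.2 (pow_ne_zero 2 (Nat.cast_ne_zero.2 (by grind)))
  have hpow : (2 : K) ^ (2 * n) = ∏ _k ∈ Icc 1 n, 2 ^ 2 := by
    rw [prod_const, Nat.card_Icc, Nat.add_sub_cancel, pow_mul]
  -- Multiplied by the product in `hne`, both sides are factorizations of `(2 * n)!`.
  refine mul_left_cancel₀ hne ?_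
  calc (∏ k ∈ Icc 1 n, -(k : K) ^ 2) *
        (2 ^ (2 * n) * ∏ k ∈ Icc 1 n, (1 - (2 * n + 1 : ℕ) * ((2 * k : ℕ) : K)⁻¹))
      = ∏ k ∈ Icc 1 n,
          -((2 * k : ℕ) : K) ^ 2 * (1 - (2 * n + 1 : ℕ) * ((2 * k : ℕ) : K)⁻¹) := by
        rw [hpow, ← prod_mul_distrib, ← prod_mul_distrib]
        refine prod_congr rfl fun k _ => ?_
        rw [Nat.cast_mul 2 k]
        ring
    _ = ∏ k ∈ Icc 1 n, ((2 * k : ℕ) : K) * (2 * n + 1 - 2 * k : ℕ) :=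
        prod_congr rfl fun k hk => (natCast_mul_natCast_sub (by grind) (by grind)).symm
    _ = ∏ j ∈ Icc 1 (2 * n), (j : K) :=
        (prod_Icc_two_mul_eq_prod_even_mul_reflect (Nat.cast : ℕ → K) n).symm
    _ = ∏ k ∈ Icc 1 n, (k : K) * (2 * n + 1 - k : ℕ) :=
        prod_Icc_two_mul_eq_prod_mul_reflect Nat.cast n
    _ = (∏ k ∈ Icc 1 n, -(k : K) ^ 2) * ∏ k ∈ Icc 1 n, (1 - (2 * n + 1 : ℕ) * (k : K)⁻¹) := by
        rw [← prod_mul_distrib]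
        exact prod_congr rfl fun k hk => natCast_mul_natCast_sub (by grind) (by grind)

end Factorial

/-- The power sum `1 ^ m + ⋯ + n ^ m` with an integer exponent, so that `powerSum n (-m)` is the
generalized harmonic number `H_n^{(m)}`. -/
def powerSum (n : ℕ) (m : ℤ) : ℚ := ∑ k ∈ Icc 1 n, (k : ℚ) ^ m

lemma powerSum_neg_one (n : ℕ) : powerSum n (-1) = harmonic n := by
  simp only [powerSum, zpow_neg_one, harmonic_eq_sum_Icc]

lemma sum_harmonic_div_eq (n : ℕ) :
    ∑ k ∈ Icc 1 n, harmonic k / k = (harmonic n ^ 2 + powerSum n (-2)) / 2 := by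
  induction n with
  | zero => simp [powerSum]
  | succ n ih =>
    rw [powerSum, sum_Icc_succ_top (by lia), sum_Icc_succ_top (by lia), ih, harmonic_succ, powerSum,
      zpow_neg, zpow_ofNat]
    field_simp
    ring

lemma ratCongr.of_sub_eq {p r : ℕ} {a b c d : ℚ} (h : ratCongr p r c d) (hsub : a - b = c - d) :
    ratCongr p r a b := by
  rwa [ratCongr, hsub]

lemma not_dvd_of_mem_Icc {p n k : ℕ} (hn : n < p) (hk : k ∈ Icc 1 n) : ¬ p ∣ k :=
  Nat.not_dvd_of_pos_of_lt (mem_Icc.1 hk).1 ((mem_Icc.1 hk).2.trans_lt hn)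

section PIntegral

variable {p : ℕ} [Fact p.Prime]

/-- The ring `ℤ_(p)` of `p`-integral rational numbers; congruences modulo `p ^ r` are stable under
multiplication by its elements. -/
noncomputable abbrev pIntegers (p : ℕ) [Fact p.Prime] : Subring ℚ :=
  (Rat.padicValuation p).integer

lemma mem_pIntegers {x : ℚ} : x ∈ pIntegers p ↔ ¬ p ∣ x.den := by
  rw [Valuation.mem_integer_iff, Rat.padicValuation_le_one_iff]

lemma padicValuation_natCast_eq_one {k : ℕ} (hk : ¬ p ∣ k) :
    Rat.padicValuation p (k : ℚ) = 1 := by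
  rw [← Int.cast_natCast, Rat.padicValuation_cast, Int.padicValuation_eq_one_iff]
  exact_mod_cast hk

lemma zpow_mem_pIntegers {x : ℚ} (hx : Rat.padicValuation p x = 1) (m : ℤ) :
    x ^ m ∈ pIntegers p := by
  rw [Valuation.mem_integer_iff, map_zpow₀, hx, one_zpow]

lemma inv_mem_pIntegers {x : ℚ} (hx : Rat.padicValuation p x = 1) :
    x⁻¹ ∈ pIntegers p := by
  simpa only [zpow_neg_one] using zpow_mem_pIntegers hx (-1)

lemma inv_natCast_mem_pIntegers {k : ℕ} (hk : 0 < k) (hkp : k < p) : (k : ℚ)⁻¹ ∈ pIntegers p :=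
  inv_mem_pIntegers (padicValuation_natCast_eq_one (Nat.not_dvd_of_pos_of_lt hk hkp))

namespace ratCongr

variable {r : ℕ} {a b c d : ℚ}

lemma iff_div_mem : ratCongr p r a b ↔ (a - b) / (p : ℚ) ^ r ∈ pIntegers p := by
  have hpr : (p : ℚ) ^ r ≠ 0 := pow_ne_zero _ (NeZero.ne _)
  simp only [ratCongr, ← mem_pIntegers, ← div_eq_iff hpr, exists_eq_left']

lemma of_sub_eq_pow_mul (hc : c ∈ pIntegers p) (hsub : a - b = p ^ r * c) :
    ratCongr p r a b :=
  ⟨c, hsub.trans (mul_comm _ _), mem_pIntegers.1 hc⟩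

lemma refl (a : ℚ) : ratCongr p r a a :=
  of_sub_eq_pow_mul (zero_mem _) (by ring)

lemma add (h₁ : ratCongr p r a b) (h₂ : ratCongr p r c d) :
    ratCongr p r (a + c) (b + d) := by
  rw [iff_div_mem] at *
  convert add_mem h₁ h₂ using 1
  ring

lemma mul_left (hc : c ∈ pIntegers p) (h : ratCongr p r a b) :
    ratCongr p r (c * a) (c * b) := by
  rw [iff_div_mem] at *
  convert mul_mem hc h using 1
  ring

lemma mul_right (hc : c ∈ pIntegers p) (h : ratCongr p r a b) :
    ratCongr p r (a * c) (b * c) :=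
  (h.mul_left hc).of_sub_eq (by ring)

lemma symm (h : ratCongr p r a b) : ratCongr p r b a :=
  (h.mul_left (neg_mem (one_mem _))).of_sub_eq (by ring)

lemma trans (h₁ : ratCongr p r a b) (h₂ : ratCongr p r b c) : ratCongr p r a c :=
  (h₁.add h₂).of_sub_eq (by ring)

lemma sub (h₁ : ratCongr p r a b) (h₂ : ratCongr p r c d) :
    ratCongr p r (a - c) (b - d) :=
  (h₁.add h₂.symm).of_sub_eq (by ring)

lemma mul (h₁ : ratCongr p r a b) (h₂ : ratCongr p r c d) (ha : a ∈ pIntegers p)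
    (hd : d ∈ pIntegers p) : ratCongr p r (a * c) (b * d) :=
  ((h₂.mul_left ha).add (h₁.mul_left hd)).of_sub_eq (by ring)

lemma pow (h : ratCongr p r a b) (ha : a ∈ pIntegers p) (hb : b ∈ pIntegers p) (k : ℕ) :
    ratCongr p r (a ^ k) (b ^ k) := by
  induction k with
  | zero => simpa only [pow_zero] using refl (p := p) 1
  | succ k ih => simpa only [pow_succ] using ih.mul h (pow_mem ha k) hb

lemma sum {ι : Type*} {s : Finset ι} {f g : ι → ℚ} (h : ∀ i ∈ s, ratCongr p r (f i) (g i)) :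
    ratCongr p r (∑ i ∈ s, f i) (∑ i ∈ s, g i) := by
  simp only [iff_div_mem] at *
  rw [← sum_sub_distrib, sum_div]
  exact sum_mem h

lemma pow_mul_iff (s : ℕ) :
    ratCongr p (s + r) (p ^ s * a) (p ^ s * b) ↔ ratCongr p r a b := by
  have hps : (p : ℚ) ^ s ≠ 0 := pow_ne_zero _ (NeZero.ne _)
  rw [iff_div_mem, iff_div_mem, ← mul_sub, pow_add, mul_div_mul_left _ _ hps]

lemma mono {s : ℕ} (hrs : r ≤ s) (h : ratCongr p s a b) : ratCongr p r a b := by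
  obtain ⟨k, rfl⟩ := Nat.exists_eq_add_of_le hrs
  obtain ⟨c, hsub, hc⟩ := h
  exact of_sub_eq_pow_mul (mul_mem (pow_mem (natCast_mem _ p) k) (mem_pIntegers.2 hc))
    (by rw [hsub]; ring)

lemma of_intModEq {a b : ℤ} (h : a ≡ b [ZMOD p ^ r]) : ratCongr p r a b := by
  obtain ⟨c, hc⟩ := h.symm.dvd
  exact .of_sub_eq_pow_mul (intCast_mem _ c) (mod_cast hc)

end ratCongr

lemma one_add_mul_zpow_congr {x : ℚ} (hx : x ∈ pIntegers p) (m : ℤ) :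
    ratCongr p 2 ((1 + p * x) ^ m) (1 + m * (p * x)) := by
  have hlt : Rat.padicValuation p (p * x) < 1 := by
    rw [map_mul, Rat.padicValuation_self]
    exact mul_lt_one_of_lt_of_le (by decide) hx
  have hunit : Rat.padicValuation p (1 + p * x) = 1 :=
    (Rat.padicValuation p).map_one_add_of_lt hlt
  have hne : 1 + p * x ≠ 0 := (Rat.padicValuation p).ne_zero_iff.1 (hunit ▸ one_ne_zero)
  induction m with
  | zero => simpa using ratCongr.refl 1
  | succ m ih =>
    rw [zpow_add_one₀ hne, mul_comm]
    refine (ih.mul_left hunit.le).trans <|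
      .of_sub_eq_pow_mul (c := m * x ^ 2) (mul_mem (natCast_mem _ _) (pow_mem hx 2)) ?_
    push_cast
    ring
  | pred m ih =>
    rw [zpow_sub_one₀ hne, mul_comm]
    have hinv := inv_mem_pIntegers hunit
    refine (ih.mul_left hinv).trans <|
      .of_sub_eq_pow_mul (c := (1 + p * x)⁻¹ * ((m + 1) * x ^ 2))
        (mul_mem hinv (mul_mem (mod_cast natCast_mem _ (m + 1)) (pow_mem hx 2))) ?_
    push_cast
    field_simp
    ring

lemma sub_zpow_congr {x : ℚ} (hx : Rat.padicValuation p x = 1) {m : ℤ} (hm : Even m) :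
    ratCongr p 2 ((p - x) ^ m) (x ^ m - p * m * x ^ (m - 1)) := by
  have hx0 : x ≠ 0 := (Rat.padicValuation p).ne_zero_iff.1 (hx ▸ one_ne_zero)
  have hfactor : (p - x) ^ m = x ^ m * (1 + p * -x⁻¹) ^ m := by
    rw [← mul_zpow, ← hm.neg_zpow]
    congr 1
    field_simp
    ring
  rw [hfactor]
  refine ((one_add_mul_zpow_congr (neg_mem (inv_mem_pIntegers hx)) m).mul_left
    (zpow_mem_pIntegers hx m)).of_sub_eq ?_
  rw [zpow_sub_one₀ hx0]
  ring

lemma natCast_pow_sub_one_congr_one {k : ℕ} (hk : ¬ p ∣ k) : ratCongr p 1 (k ^ (p - 1)) 1 := by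
  have hcop : IsCoprime (k : ℤ) p :=
    Nat.isCoprime_iff_coprime.2 ((Fact.out : p.Prime).coprime_iff_not_dvd.2 hk).symm
  exact_mod_cast ratCongr.of_intModEq (p := p) (r := 1)
    (by simpa using Int.ModEq.pow_card_sub_one_eq_one Fact.out hcop)

lemma natCast_zpow_add_sub_one_congr {k : ℕ} (hk : ¬ p ∣ k) (m : ℤ) :
    ratCongr p 1 (k ^ (m + (p - 1))) (k ^ m) := by
  have hk0 : (k : ℚ) ≠ 0 := Nat.cast_ne_zero.2 fun h0 => hk (h0 ▸ dvd_zero p)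
  have hp1 : (p - 1 : ℤ) = (p - 1 : ℕ) := (Nat.cast_pred (NeZero.pos p)).symm
  rw [zpow_add₀ hk0, hp1, zpow_natCast]
  simpa only [mul_one] using (natCast_pow_sub_one_congr_one hk).mul_left
    (zpow_mem_pIntegers (padicValuation_natCast_eq_one hk) m)

lemma fermatQ_mem_pIntegers (hp : p ≠ 2) : fermatQ p ∈ pIntegers p := by
  have h2 : ¬ p ∣ 2 := by rwa [Nat.prime_dvd_prime_iff_eq Fact.out Nat.prime_two]
  simpa [fermatQ] using ratCongr.iff_div_mem.1 (natCast_pow_sub_one_congr_one h2)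

lemma bernoulli_mem_pIntegers {m : ℕ} (hm : m + 1 < p) : bernoulli m ∈ pIntegers p := by
  induction m using Nat.strong_induction_on with
  | _ m ih =>
    have hrec : bernoulli m = ((m + 1 : ℕ) : ℚ)⁻¹ *
        ((if m + 1 = 1 then 1 else 0) - ∑ k ∈ range m, (m + 1).choose k * bernoulli k) := by
      rw [← sum_bernoulli, sum_range_succ, Nat.choose_succ_self_right, add_sub_cancel_left,
        inv_mul_cancel_left₀ (by positivity)]
    rw [hrec]
    refine mul_mem (inv_natCast_mem_pIntegers m.succ_pos hm)
      (sub_mem ?_ <| sum_mem fun k hk => ?_)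
    · split_ifs
      exacts [one_mem _, zero_mem _]
    · have hkm := mem_range.1 hk
      exact mul_mem (natCast_mem _ _) (ih k hkm (by lia))

lemma sum_range_pow_congr_mul_bernoulli {m : ℕ} (hm : m + 1 < p) :
    ratCongr p 2 (∑ k ∈ range p, (k : ℚ) ^ m) (p * bernoulli m) := by
  refine .of_sub_eq_pow_mul (c := ∑ i ∈ range m,
    bernoulli i * (m + 1).choose i * p ^ (m - 1 - i) * ((m + 1 : ℕ) : ℚ)⁻¹)
    (sum_mem fun i hi => ?_) ?_
  · have him := mem_range.1 hi
    exact mul_mem (mul_mem (mul_mem (bernoulli_mem_pIntegers (by lia)) (natCast_mem _ _))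
      (pow_mem (natCast_mem _ _) _)) (inv_natCast_mem_pIntegers m.succ_pos hm)
  · have hlast : bernoulli m * ((m + 1 : ℕ) : ℚ) * p ^ (m + 1 - m) / (m + 1) = p * bernoulli m := by
      rw [Nat.add_sub_cancel_left]
      push_cast
      field_simp
    rw [sum_range_pow, sum_range_succ, Nat.choose_succ_self_right, hlast, add_sub_cancel_right,
      mul_sum]
    refine sum_congr rfl fun i hi => ?_
    have him := mem_range.1 hi
    rw [show m + 1 - i = 2 + (m - 1 - i) by lia, pow_add]
    push_cast
    ring

lemma zpow_mem_pIntegers_of_mem_Icc {n k : ℕ} (hn : n < p) (hk : k ∈ Icc 1 n) (m : ℤ) :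
    (k : ℚ) ^ m ∈ pIntegers p :=
  zpow_mem_pIntegers (padicValuation_natCast_eq_one (not_dvd_of_mem_Icc hn hk)) m

lemma powerSum_mem_pIntegers {n : ℕ} (hn : n < p) (m : ℤ) : powerSum n m ∈ pIntegers p :=
  sum_mem fun _ hk => zpow_mem_pIntegers_of_mem_Icc hn hk m

lemma harmonic_mem_pIntegers {n : ℕ} (hn : n < p) : harmonic n ∈ pIntegers p :=
  powerSum_neg_one n ▸ powerSum_mem_pIntegers hn (-1)

lemma powerSum_add_sub_one_congr {n : ℕ} (hn : n < p) (m : ℤ) :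
    ratCongr p 1 (powerSum n (m + (p - 1))) (powerSum n m) :=
  .sum fun _ hk => natCast_zpow_add_sub_one_congr (not_dvd_of_mem_Icc hn hk) m

lemma powerSum_sub_one_congr_mul_bernoulli {m : ℕ} (hm0 : m ≠ 0) (hm : m + 1 < p) :
    ratCongr p 2 (powerSum (p - 1) m) (p * bernoulli m) := by
  have hsum : powerSum (p - 1) m = ∑ k ∈ range p, (k : ℚ) ^ m := by
    rw [range_eq_Ico, sum_eq_sum_Ico_succ_bot (NeZero.pos p), Nat.cast_zero, zero_pow hm0, zero_add,
      ← Icc_sub_one_right_eq_Ico_of_not_isMin (not_isMin_iff_ne_bot.2 (NeZero.ne p))]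
    simp only [powerSum, zpow_natCast, zero_add]
  exact hsum ▸ sum_range_pow_congr_mul_bernoulli hm

section HalfRange

variable {n : ℕ}

lemma sub_zpow_congr_of_mem_Icc (hpn : p = 2 * n + 1) {m : ℤ} (hm : Even m) {k : ℕ}
    (hk : k ∈ Icc 1 (2 * n)) :
    ratCongr p 2 (((2 * n + 1 - k : ℕ) : ℚ) ^ m) (k ^ m - p * m * k ^ (m - 1)) := by
  have hkp : k ≤ p := by grind
  rw [← hpn, Nat.cast_sub hkp]
  exact sub_zpow_congr (padicValuation_natCast_eq_one (not_dvd_of_mem_Icc (by lia) hk)) hm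

lemma powerSum_two_mul_congr_reflect (hpn : p = 2 * n + 1) {m : ℤ} (hm : Even m) :
    ratCongr p 2 (powerSum (2 * n) m) (2 * powerSum n m - p * m * powerSum n (m - 1)) := by
  have hterm : ∀ k ∈ Icc 1 n, ratCongr p 2 ((k : ℚ) ^ m + ((2 * n + 1 - k : ℕ) : ℚ) ^ m)
      (2 * k ^ m - p * m * k ^ (m - 1)) := fun k hk =>
    ((ratCongr.refl _).add (sub_zpow_congr_of_mem_Icc hpn hm (by grind))).trans
      ((ratCongr.refl _).of_sub_eq (by ring))
  simpa only [powerSum, sum_Icc_two_mul_eq_sum_add_reflect, sum_sub_distrib, ← mul_sum]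
    using ratCongr.sum hterm

lemma powerSum_two_mul_congr_parity (hpn : p = 2 * n + 1) {m : ℤ} (hm : Even m) :
    ratCongr p 2 (powerSum (2 * n) m)
      (2 * 2 ^ m * powerSum n m - p * m * 2 ^ (m - 1) * powerSum n (m - 1)) := by
  have hterm : ∀ k ∈ Icc 1 n,
      ratCongr p 2 (((2 * k : ℕ) : ℚ) ^ m + ((2 * n + 1 - 2 * k : ℕ) : ℚ) ^ m)
        (2 * 2 ^ m * k ^ m - p * m * 2 ^ (m - 1) * k ^ (m - 1)) := fun k hk =>
    ((ratCongr.refl _).add (sub_zpow_congr_of_mem_Icc hpn hm (by grind))).trans <|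
      (ratCongr.refl _).of_sub_eq <| by
        push_cast
        rw [mul_zpow, mul_zpow]
        ring
  simpa only [powerSum, sum_Icc_two_mul_eq_sum_even_add_reflect, sum_sub_distrib, ← mul_sum]
    using ratCongr.sum hterm

lemma powerSum_congr_mul_powerSum_sub_one (hpn : p = 2 * n + 1) {m : ℤ} (hm : Even m) :
    ratCongr p 2 ((2 * 2 ^ m - 2) * powerSum n m)
      (p * m * (2 ^ (m - 1) - 1) * powerSum n (m - 1)) :=
  ((powerSum_two_mul_congr_parity hpn hm).symm.trans
    (powerSum_two_mul_congr_reflect hpn hm)).of_sub_eq (by ring)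

lemma two_pow_sub_one_mul_bernoulli_congr (hpn : p = 2 * n + 1) {m : ℕ} (hm0 : m ≠ 0)
    (hm : Even m) (hmp : m + 1 < p) :
    ratCongr p 1 ((2 ^ m - 1) * bernoulli m)
      (-m * 2 ^ (m - 1 : ℤ) * powerSum n (m - 1)) := by
  have hmZ : Even (m : ℤ) := mod_cast hm
  have hreflect := powerSum_two_mul_congr_reflect hpn hmZ
  have hparity := powerSum_two_mul_congr_parity hpn hmZ
  have hfull : ratCongr p 2 (powerSum (2 * n) m) (p * bernoulli m) := by
    simpa [hpn] using powerSum_sub_one_congr_mul_bernoulli hm0 hmp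
  have h2m : (2 : ℚ) ^ m ∈ pIntegers p := pow_mem (ofNat_mem _ 2) m
  have helim := ((hfull.symm.trans hreflect).mul_left h2m).sub (hfull.symm.trans hparity)
  refine (ratCongr.pow_mul_iff 1).1 (helim.of_sub_eq ?_)
  rw [zpow_sub_one₀ two_ne_zero, zpow_natCast, Int.cast_natCast]
  ring

lemma powerSum_neg_two_congr_powerSum_neg_three (hpn : p = 2 * n + 1) (hp3 : 3 < p) :
    ratCongr p 2 (powerSum n (-2)) (-(7 / 6) * (p * powerSum n (-3))) := by
  have h3 : -(2 * 3⁻¹) ∈ pIntegers p :=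
    neg_mem (mul_mem (ofNat_mem _ 2) (inv_natCast_mem_pIntegers three_pos hp3))
  refine ((powerSum_congr_mul_powerSum_sub_one hpn (by decide : Even (-2 : ℤ))).mul_left
    h3).of_sub_eq ?_
  norm_num
  ring

lemma powerSum_neg_three_congr_bernoulli (hpn : p = 2 * n + 1) (hp3 : 3 < p) :
    ratCongr p 1 (powerSum n (-3)) (-2 * bernoulli (p - 3)) := by
  have h2 : ¬ p ∣ 2 := Nat.not_dvd_of_pos_of_lt two_pos (by lia)
  have h2pow (m : ℤ) : (2 : ℚ) ^ m ∈ pIntegers p :=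
    zpow_mem_pIntegers (padicValuation_natCast_eq_one h2) m
  have hfermat (m : ℤ) : ratCongr p 1 (2 ^ (m + (p - 1))) (2 ^ m) :=
    natCast_zpow_add_sub_one_congr h2 m
  have hcoef : ratCongr p 1 (-(p - 3 : ℕ)) 3 := by
    refine .of_sub_eq_pow_mul (c := -1) (neg_mem (one_mem _)) ?_
    push_cast [hp3.le]
    ring
  have hdouble := two_pow_sub_one_mul_bernoulli_congr hpn (m := p - 3) (by lia) (by grind) (by lia)
  rw [← zpow_natCast, show ((p - 3 : ℕ) : ℤ) = -2 + (p - 1) by lia,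
    show -2 + (p - 1 : ℤ) - 1 = -3 + (p - 1) by ring] at hdouble
  have hleft : ratCongr p 1 ((2 ^ (-2 : ℤ) - 1) * bernoulli (p - 3))
      ((2 ^ (-2 + (p - 1 : ℤ)) - 1) * bernoulli (p - 3)) :=
    ((hfermat (-2)).symm.sub (.refl 1)).mul_right (bernoulli_mem_pIntegers (by lia))
  have hright : ratCongr p 1
      (-(p - 3 : ℕ) * 2 ^ (-3 + (p - 1 : ℤ)) * powerSum n (-3 + (p - 1)))
      (3 * 2 ^ (-3 : ℤ) * powerSum n (-3)) :=
    (hcoef.mul (hfermat (-3)) (neg_mem (natCast_mem _ _)) (h2pow _)).mul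
      (powerSum_add_sub_one_congr (by lia) (-3)) (mul_mem (neg_mem (natCast_mem _ _)) (h2pow _))
      (powerSum_mem_pIntegers (by lia) _)
  have hunit : 8 * 3⁻¹ ∈ pIntegers p :=
    mul_mem (ofNat_mem _ 8) (inv_natCast_mem_pIntegers three_pos hp3)
  refine (((hleft.trans hdouble).trans hright).symm.mul_left hunit).of_sub_eq ?_
  norm_num
  ring

lemma powerSum_neg_two_congr_bernoulli (hpn : p = 2 * n + 1) (hp3 : 3 < p) :
    ratCongr p 2 (powerSum n (-2)) (7 / 3 * p * bernoulli (p - 3)) := by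
  have h3 : -(7 * 2⁻¹ * 3⁻¹) ∈ pIntegers p :=
    neg_mem (mul_mem (mul_mem (ofNat_mem _ 7) (inv_natCast_mem_pIntegers two_pos (by lia)))
      (inv_natCast_mem_pIntegers three_pos hp3))
  refine (powerSum_neg_two_congr_powerSum_neg_three hpn hp3).trans <| (((ratCongr.pow_mul_iff 1).2
    (powerSum_neg_three_congr_bernoulli hpn hp3)).mul_left h3).of_sub_eq ?_
  ring

lemma two_mul_prod_one_sub_mul_congr {ι : Type*} {s : Finset ι} {x : ι → ℚ}
    (hx : ∀ i ∈ s, x i ∈ pIntegers p) :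
    ratCongr p 3 (2 * ∏ i ∈ s, (1 - p * x i))
      (2 - 2 * p * ∑ i ∈ s, x i + p ^ 2 * ((∑ i ∈ s, x i) ^ 2 - ∑ i ∈ s, x i ^ 2)) := by
  induction s using Finset.cons_induction with
  | empty => simpa using ratCongr.refl 2
  | cons i s his ih =>
    rw [forall_mem_cons] at hx
    obtain ⟨hxi, hxs⟩ := hx
    have hfactor : 1 - p * x i ∈ pIntegers p := sub_mem (one_mem _) (mul_mem (natCast_mem _ _) hxi)
    have hcoef : -x i * ((∑ j ∈ s, x j) ^ 2 - ∑ j ∈ s, x j ^ 2) ∈ pIntegers p :=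
      mul_mem (neg_mem hxi) <|
        sub_mem (pow_mem (sum_mem hxs) 2) (sum_mem fun j hj => pow_mem (hxs j hj) 2)
    rw [prod_cons, sum_cons, sum_cons, mul_left_comm]
    refine ((ih hxs).mul_left hfactor).trans (.of_sub_eq_pow_mul hcoef ?_)
    ring

lemma sq_mul_powerSum_neg_two_congr_zero (hpn : p = 2 * n + 1) (hp3 : 3 < p) :
    ratCongr p 3 (p ^ 2 * powerSum n (-2)) 0 := by
  have hB : 7 * 3⁻¹ * bernoulli (p - 3) ∈ pIntegers p :=
    mul_mem (mul_mem (ofNat_mem _ 7) (inv_natCast_mem_pIntegers three_pos hp3))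
      (bernoulli_mem_pIntegers (by lia))
  have hS : ratCongr p 1 (powerSum n (-2)) 0 :=
    ((powerSum_neg_two_congr_bernoulli hpn hp3).mono one_le_two).trans
      (.of_sub_eq_pow_mul hB (by ring))
  simpa only [mul_zero] using (ratCongr.pow_mul_iff 2).2 hS

lemma two_mul_prod_one_sub_mul_inv_congr_harmonic (hpn : p = 2 * n + 1) (hp3 : 3 < p) {c : ℚ}
    (hc : c ∈ pIntegers p) :
    ratCongr p 3 (2 * ∏ k ∈ Icc 1 n, (1 - p * (c * (k : ℚ)⁻¹)))
      (2 - 2 * p * (c * harmonic n) + p ^ 2 * (c * harmonic n) ^ 2) := by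
  have hterm : ∀ k ∈ Icc 1 n, c * (k : ℚ)⁻¹ ∈ pIntegers p := fun k hk =>
    mul_mem hc (by simpa using zpow_mem_pIntegers_of_mem_Icc (by lia : n < p) hk (-1))
  have hsum : ∑ k ∈ Icc 1 n, c * (k : ℚ)⁻¹ = c * harmonic n := by
    rw [← mul_sum, harmonic_eq_sum_Icc]
  have hsq : ∑ k ∈ Icc 1 n, (c * (k : ℚ)⁻¹) ^ 2 = c ^ 2 * powerSum n (-2) := by
    simp only [powerSum, mul_sum, mul_pow, zpow_neg, zpow_ofNat, inv_pow]
  have hexpand := two_mul_prod_one_sub_mul_congr hterm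
  rw [hsum, hsq] at hexpand
  exact (hexpand.add ((sq_mul_powerSum_neg_two_congr_zero hpn hp3).symm.mul_left
    (pow_mem hc 2))).of_sub_eq (by ring)

lemma congr_neg_two_mul_add_of_one_add_mul_congr (hp2 : 2 < p) {H q : ℚ} (hH : H ∈ pIntegers p)
    (hq : q ∈ pIntegers p)
    (h : ratCongr p 3 ((1 + p * q) * (2 - p * H + p ^ 2 * (H / 2) ^ 2))
      (2 - 2 * p * H + p ^ 2 * H ^ 2)) :
    ratCongr p 2 H (-2 * q + p * q ^ 2) := by
  have h2 : (2 : ℚ)⁻¹ ∈ pIntegers p := inv_natCast_mem_pIntegers two_pos hp2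
  have h4 : 3 * (2 : ℚ)⁻¹ ^ 2 ∈ pIntegers p := mul_mem (ofNat_mem _ 3) (pow_mem h2 2)
  have hcubic : ratCongr p 3 (p ^ 3 * (q * (H * 2⁻¹) ^ 2)) 0 :=
    .of_sub_eq_pow_mul (mul_mem hq (pow_mem (mul_mem hH h2) 2)) (by ring)
  have hquad : ratCongr p 2 (H + 2 * q) (p * (3 * 2⁻¹ ^ 2 * H ^ 2 + q * H)) :=
    (ratCongr.pow_mul_iff 1).1 <| (h.sub hcubic).of_sub_eq (by ring)
  have hlin : ratCongr p 1 H (-2 * q) :=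
    ((hquad.mono one_le_two).trans <| .of_sub_eq_pow_mul (b := 0)
      (add_mem (mul_mem h4 (pow_mem hH 2)) (mul_mem hq hH)) (by ring)).of_sub_eq (by ring)
  have hrhs : ratCongr p 1 (3 * 2⁻¹ ^ 2 * H ^ 2 + q * H) (q ^ 2) := by
    have hsq := hlin.pow hH (mul_mem (neg_mem (ofNat_mem _ 2)) hq) 2
    exact ((hsq.mul_left h4).add (hlin.mul_left hq)).of_sub_eq (by ring)
  exact (hquad.add ((ratCongr.pow_mul_iff 1).2 hrhs)).of_sub_eq (by ring)

lemma harmonic_congr_fermatQ (hpn : p = 2 * n + 1) (hp3 : 3 < p) :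
    ratCongr p 2 (harmonic n) (-2 * fermatQ p + p * fermatQ p ^ 2) := by
  have h2 : (2 : ℚ)⁻¹ ∈ pIntegers p := inv_natCast_mem_pIntegers two_pos (by lia)
  have hq : fermatQ p ∈ pIntegers p := fermatQ_mem_pIntegers (by lia)
  have hpow : (2 : ℚ) ^ (2 * n) = 1 + p * fermatQ p := by
    rw [fermatQ, mul_div_cancel₀ _ (NeZero.ne _), show p - 1 = 2 * n by lia, add_sub_cancel]
  have hprod := two_pow_mul_prod_one_sub (K := ℚ) n
  have hhalf := two_mul_prod_one_sub_mul_inv_congr_harmonic hpn hp3 h2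
  have hfull := two_mul_prod_one_sub_mul_inv_congr_harmonic hpn hp3 (one_mem _)
  simp only [← hpn, hpow, Nat.cast_mul, Nat.cast_ofNat, mul_inv] at hprod
  simp only [one_mul, ← hprod] at hfull
  refine congr_neg_two_mul_add_of_one_add_mul_congr (by lia) (harmonic_mem_pIntegers (by lia)) hq ?_
  have hunit : 1 + p * fermatQ p ∈ pIntegers p := add_mem (one_mem _) (mul_mem (natCast_mem _ p) hq)
  exact ((hhalf.symm.mul_left hunit).add hfull).of_sub_eq (by ring)

lemma harmonic_sq_congr_fermatQ (hpn : p = 2 * n + 1) (hp3 : 3 < p) :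
    ratCongr p 2 (harmonic n ^ 2) (4 * fermatQ p ^ 2 - 4 * p * fermatQ p ^ 3) := by
  have hq : fermatQ p ∈ pIntegers p := fermatQ_mem_pIntegers (by lia)
  have hrhs : -2 * fermatQ p + p * fermatQ p ^ 2 ∈ pIntegers p :=
    add_mem (mul_mem (neg_mem (ofNat_mem _ 2)) hq) (mul_mem (natCast_mem _ p) (pow_mem hq 2))
  exact ((harmonic_congr_fermatQ hpn hp3).pow (harmonic_mem_pIntegers (by lia)) hrhs 2).trans
    (.of_sub_eq_pow_mul (pow_mem hq 4) (by ring))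

end HalfRange

end PIntegral

theorem sum_Hk_div_k (p : ℕ) (hp : p.Prime) (hp3 : 3 < p) :
    ratCongr p 2
      (∑ k ∈ Finset.Icc 1 ((p - 1) / 2), harmonic k / k)
      (2 * fermatQ p ^ 2 - 2 * p * fermatQ p ^ 3 + (7 / 6) * p * bernoulli (p - 3)) := by
  have : Fact p.Prime := ⟨hp⟩
  obtain ⟨n, hpn⟩ : ∃ n, p = 2 * n + 1 := hp.odd_of_ne_two (by lia)
  have h2 : (2 : ℚ)⁻¹ ∈ pIntegers p := inv_natCast_mem_pIntegers two_pos (by lia)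
  have hsum := ((harmonic_sq_congr_fermatQ hpn hp3).add
    (powerSum_neg_two_congr_bernoulli hpn hp3)).mul_left h2
  rw [show (p - 1) / 2 = n by lia, sum_harmonic_div_eq]
  exact hsum.of_sub_eq (by ring)
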